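/- arXiv:2409.02852 — 6 statements merged into one kernel-verified Lean document; each statement's English description precedes it below -/
import Mathlib

section
/- There exists a constant C > 0 such that for all integers n and s with 2 ≤ n ≤ s, the entropy H_{B|S} of the discretized Beta(1, n) distribution satisfies |H_{B|S} − (ln s − ln n + (n − 1)/n)| ≤ C · n · (ln n) / s. -/
/-- The entropy (in nats) of the discretization of the `Beta(1, n)` distribution onto the
uniform partition of `[0,1]` into `s` pieces: the `i`-th cell has probability
`(1 - i/s)^n - (1 - (i+1)/s)^n`. -/
noncomputable def discretizedBetaEntropy (n s : ℕ) : ℝ :=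
  -∑ i ∈ Finset.range s,
      ((1 - (i : ℝ) / s) ^ n - (1 - ((i : ℝ) + 1) / s) ^ n) *
        Real.log ((1 - (i : ℝ) / s) ^ n - (1 - ((i : ℝ) + 1) / s) ^ n)

lemma aux_pow_sub (m : ℕ) (a b : ℝ) (ha : 0 ≤ a) (hab : a ≤ b) :
    (m + 1 : ℝ) * a ^ m * (b - a) ≤ b ^ (m + 1) - a ^ (m + 1) ∧
      b ^ (m + 1) - a ^ (m + 1) ≤ (m + 1 : ℝ) * b ^ m * (b - a) := by
  induction m with
  | zero => constructor <;> simp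
  | succ m ih =>
    obtain ⟨h1, h2⟩ := ih
    have hb : 0 ≤ b := ha.trans hab
    have hp : a ^ (m + 1) ≤ b ^ (m + 1) := pow_le_pow_left₀ ha hab _
    have hd : 0 ≤ b - a := sub_nonneg.2 hab
    have h3 := mul_le_mul_of_nonneg_left h1 ha
    have h4 := mul_le_mul_of_nonneg_left h2 hb
    have h5 := mul_le_mul_of_nonneg_right hp hd
    have e1 : b ^ (m + 1 + 1) - a ^ (m + 1 + 1)
        = a * (b ^ (m + 1) - a ^ (m + 1)) + b ^ (m + 1) * (b - a) := by ring
    have e2 : b ^ (m + 1 + 1) - a ^ (m + 1 + 1)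
        = b * (b ^ (m + 1) - a ^ (m + 1)) + a ^ (m + 1) * (b - a) := by ring
    constructor
    · rw [e1]; push_cast
      have : ((m : ℝ) + 1 + 1) * a ^ (m + 1) * (b - a)
        = a * ((m + 1 : ℝ) * a ^ m * (b - a)) + a ^ (m + 1) * (b - a) := by ring
      linarith
    · rw [e2]; push_cast
      have : ((m : ℝ) + 1 + 1) * b ^ (m + 1) * (b - a)
        = b * ((m + 1 : ℝ) * b ^ m * (b - a)) + b ^ (m + 1) * (b - a) := by ring
      linarith

lemma aux_phi (v w : ℝ) (hv : 0 < v) (hw : 0 < w) :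
    (w - v) * Real.log v ≤ (w * Real.log w - w) - (v * Real.log v - v) := by
  have h := Real.log_le_sub_one_of_pos (div_pos hv hw)
  rw [Real.log_div hv.ne' hw.ne'] at h
  have h2 := mul_le_mul_of_nonneg_left h hw.le
  have : w * (v / w - 1) = v - w := by field_simp
  nlinarith

noncomputable def auxG (l : ℕ) (y : ℝ) : ℝ :=
  y ^ (l + 2) * Real.log (l + 2) +
    ((l + 1 : ℝ) / (l + 2)) * (y ^ (l + 2) * Real.log (y ^ (l + 2)) - y ^ (l + 2))

lemma aux_term (l : ℕ) (a b : ℝ) (ha : 0 < a) (hab : a < b) :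
    |auxG l b - auxG l a - (b ^ (l + 2) - a ^ (l + 2)) *
        Real.log ((b ^ (l + 2) - a ^ (l + 2)) / (b - a))| ≤
      (l + 2) * b ^ (l + 1) * (b - a) * ((l + 1) * (b / a - 1)) := by
  have hb : 0 < b := ha.trans hab
  have hd : 0 < b - a := sub_pos.2 hab
  have hv : 0 < a ^ (l + 2) := by positivity
  have hw : 0 < b ^ (l + 2) := by positivity
  have hvw : a ^ (l + 2) < b ^ (l + 2) := pow_lt_pow_left₀ hab ha.le (by omega)
  have hl : (0 : ℝ) < l + 2 := by positivity
  obtain ⟨h1, h2⟩ := aux_pow_sub (l + 1) a b ha.le hab.le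
  have e2 : ((l + 1 : ℕ) : ℝ) + 1 = l + 2 := by push_cast; ring
  rw [e2] at h1 h2
  change _ ≤ b ^ (l + 2) - a ^ (l + 2) at h1
  change b ^ (l + 2) - a ^ (l + 2) ≤ _ at h2
  have p1 := aux_phi _ _ hv hw
  have p2 := aux_phi _ _ hw hv
  have lf : ∀ y : ℝ, 0 < y → Real.log ((l + 2) * y ^ (l + 1)) =
      Real.log (l + 2) + ((l + 1 : ℝ) / (l + 2)) * Real.log (y ^ (l + 2)) := by
    intro y hy
    rw [Real.log_mul hl.ne' (by positivity), Real.log_pow, Real.log_pow]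
    push_cast
    field_simp
  have q1 : Real.log ((l + 2) * a ^ (l + 1)) ≤
      Real.log ((b ^ (l + 2) - a ^ (l + 2)) / (b - a)) := by
    apply Real.log_le_log (by positivity)
    rw [le_div_iff₀ hd]; exact h1
  have q2 : Real.log ((b ^ (l + 2) - a ^ (l + 2)) / (b - a)) ≤
      Real.log ((l + 2) * b ^ (l + 1)) := by
    apply Real.log_le_log (div_pos (sub_pos.2 hvw) hd)
    rw [div_le_iff₀ hd]; exact h2
  have hc : 0 ≤ ((l + 1 : ℝ) / (l + 2)) := by positivity
  have g1 : (b ^ (l + 2) - a ^ (l + 2)) * Real.log ((l + 2) * a ^ (l + 1)) ≤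
      auxG l b - auxG l a := by
    rw [lf a ha]; unfold auxG
    have := mul_le_mul_of_nonneg_left p1 hc
    linarith
  have g2 : auxG l b - auxG l a ≤
      (b ^ (l + 2) - a ^ (l + 2)) * Real.log ((l + 2) * b ^ (l + 1)) := by
    rw [lf b hb]; unfold auxG
    have := mul_le_mul_of_nonneg_left p2 hc
    linarith
  have hD : 0 ≤ b ^ (l + 2) - a ^ (l + 2) := (sub_pos.2 hvw).le
  have q1' := mul_le_mul_of_nonneg_left q1 hD
  have q2' := mul_le_mul_of_nonneg_left q2 hD
  have r : Real.log ((l + 2) * b ^ (l + 1)) - Real.log ((l + 2) * a ^ (l + 1)) ≤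
      (l + 1) * (b / a - 1) := by
    have h := Real.log_le_sub_one_of_pos (div_pos hb ha)
    rw [Real.log_div hb.ne' ha.ne'] at h
    rw [Real.log_mul hl.ne' (by positivity), Real.log_mul hl.ne' (by positivity),
      Real.log_pow, Real.log_pow]
    push_cast
    have := mul_le_mul_of_nonneg_left h (by positivity : (0 : ℝ) ≤ l + 1)
    linarith
  have hr0 : (0 : ℝ) ≤ (l + 1) * (b / a - 1) := by
    have : 1 ≤ b / a := by rw [le_div_iff₀ ha]; linarith
    have : 0 ≤ b / a - 1 := by linarith
    positivity
  have s1 := mul_le_mul_of_nonneg_left r hD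
  have s2 := mul_le_mul_of_nonneg_right h2 hr0
  rw [abs_le]
  constructor <;> linarith

lemma aux_cell (l s k : ℕ) (hs : 0 < s) :
    |auxG l (((k : ℝ) + 1) / s) - auxG l ((k : ℝ) / s) -
      ((((k : ℝ) + 1) / s) ^ (l + 2) - ((k : ℝ) / s) ^ (l + 2)) *
        (Real.log ((((k : ℝ) + 1) / s) ^ (l + 2) - ((k : ℝ) / s) ^ (l + 2)) + Real.log s)| ≤
      2 * (l + 2) / s * ((((k + 1 : ℕ) : ℝ) / s + 1 / s) ^ (l + 1) - ((k : ℝ) / s + 1 / s) ^ (l + 1))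
      + (if k = 0 then (l + 2) * (Real.log (l + 2) + 1) / s else 0) := by
  have hs' : (0 : ℝ) < s := by exact_mod_cast hs
  have hs1 : (1 : ℝ) ≤ s := by exact_mod_cast hs
  have hl2 : (0 : ℝ) ≤ Real.log (l + 2) := Real.log_nonneg (by linarith [(Nat.cast_nonneg l : (0 : ℝ) ≤ l)])
  obtain ⟨h1, h2⟩ := aux_pow_sub l ((k : ℝ) / s + 1 / s) (((k + 1 : ℕ) : ℝ) / s + 1 / s) (by positivity)
    (by push_cast; gcongr; linarith)
  have ed : (((k + 1 : ℕ) : ℝ) / s + 1 / s) - ((k : ℝ) / s + 1 / s) = 1 / s := by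
    push_cast; ring
  rw [ed] at h1
  have eb : (k : ℝ) / s + 1 / s = ((k : ℝ) + 1) / s := by ring
  rcases Nat.eq_zero_or_pos k with rfl | hk
  · have hA : 0 ≤ 2 * ((l : ℝ) + 2) / s * ((((0 + 1 : ℕ) : ℝ) / s + 1 / s) ^ (l + 1) - (((0 : ℕ) : ℝ) / s + 1 / s) ^ (l + 1)) := by
      apply mul_nonneg (by positivity)
      exact le_trans (by positivity) h1
    simp only [if_true]
    refine le_trans ?_ (le_add_of_nonneg_left hA)
    have hu : ((1 : ℝ) / s) ^ (l + 2) ≤ 1 / s := by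
      have : (1 : ℝ) / s ≤ 1 := by rw [div_le_one hs']; exact hs1
      exact pow_le_of_le_one (by positivity) this (by omega)
    have hc0 : 0 ≤ ((l + 1 : ℝ) / (l + 2)) := by positivity
    have hc1 : ((l + 1 : ℝ) / (l + 2)) ≤ 1 := by
      rw [div_le_one (by positivity)]; linarith
    have key : auxG l ((((0 : ℕ) : ℝ) + 1) / s) - auxG l (((0 : ℕ) : ℝ) / s) -
      (((((0 : ℕ) : ℝ) + 1) / s) ^ (l + 2) - (((0 : ℕ) : ℝ) / s) ^ (l + 2)) *
        (Real.log (((((0 : ℕ) : ℝ) + 1) / s) ^ (l + 2) - (((0 : ℕ) : ℝ) / s) ^ (l + 2)) + Real.log s)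
        = ((1 : ℝ) / s) ^ (l + 2) * (Real.log (l + 2) - (l + 1 : ℝ) / (l + 2)) := by
      unfold auxG
      have hz : ((0 : ℝ)) ^ (l + 2) = 0 := zero_pow (by omega)
      simp only [Nat.cast_zero, zero_add, zero_div, hz, sub_zero, zero_mul, mul_zero]
      rw [Real.log_pow, one_div, Real.log_inv]
      push_cast
      field_simp
      ring
    rw [key, abs_mul, abs_of_nonneg (by positivity : (0 : ℝ) ≤ (1 / s) ^ (l + 2))]
    have hb : |Real.log (l + 2) - (l + 1 : ℝ) / (l + 2)| ≤ Real.log (l + 2) + 1 := by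
      rw [abs_le]; constructor <;> linarith
    calc ((1 : ℝ) / s) ^ (l + 2) * |Real.log (l + 2) - (l + 1 : ℝ) / (l + 2)|
        ≤ (1 / s) * (Real.log (l + 2) + 1) := by gcongr
      _ ≤ (l + 2) * ((1 / s) * (Real.log (l + 2) + 1)) := by
        apply le_mul_of_one_le_left (by positivity)
        linarith [(Nat.cast_nonneg l : (0 : ℝ) ≤ l)]
      _ = _ := by ring
  · have hk' : (1 : ℝ) ≤ k := by exact_mod_cast hk
    rw [if_neg (by omega), add_zero]
    have ha : 0 < (k : ℝ) / s := by positivity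
    have hab : (k : ℝ) / s < ((k : ℝ) + 1) / s := by gcongr; linarith
    have h := aux_term l _ _ ha hab
    have hd : ((k : ℝ) + 1) / s - (k : ℝ) / s = 1 / s := by ring
    have hpos : 0 < (((k : ℝ) + 1) / s) ^ (l + 2) - ((k : ℝ) / s) ^ (l + 2) :=
      sub_pos.2 (pow_lt_pow_left₀ hab ha.le (by omega))
    rw [hd, div_div_eq_mul_div, div_one, Real.log_mul hpos.ne' hs'.ne'] at h
    refine h.trans ?_
    have hr : ((k : ℝ) + 1) / s / (k / s) - 1 = 1 / k := by field_simp; ring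
    rw [hr]
    have hk2 : (1 : ℝ) / k ≤ 2 / (k + 1) := by
      rw [div_le_div_iff₀ (by positivity) (by positivity)]; linarith
    rw [eb] at h1 ⊢
    calc ((l : ℝ) + 2) * (((k : ℝ) + 1) / s) ^ (l + 1) * (1 / s) * ((l + 1) * (1 / k))
        ≤ ((l : ℝ) + 2) * (((k : ℝ) + 1) / s) ^ (l + 1) * (1 / s) * ((l + 1) * (2 / (k + 1))) := by
          gcongr
      _ = 2 * (l + 2) / s * ((l + 1 : ℝ) * (((k : ℝ) + 1) / s) ^ l * (1 / s)) := by
          rw [pow_succ]; field_simp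
      _ ≤ _ := by gcongr

lemma aux_entropy (n s : ℕ) (hs : 0 < s) : discretizedBetaEntropy n s =
    -∑ k ∈ Finset.range s, ((((k : ℝ) + 1) / s) ^ n - ((k : ℝ) / s) ^ n) *
        Real.log ((((k : ℝ) + 1) / s) ^ n - ((k : ℝ) / s) ^ n) := by
  unfold discretizedBetaEntropy
  rw [← Finset.sum_range_reflect]
  congr 1
  apply Finset.sum_congr rfl
  intro k hk
  have hk : k < s := Finset.mem_range.1 hk
  have hs' : (s : ℝ) ≠ 0 := by exact_mod_cast hs.ne'
  have e : ((s - 1 - k : ℕ) : ℝ) = s - 1 - k := by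
    rw [Nat.cast_sub (by omega), Nat.cast_sub (by omega)]; simp
  have e1 : 1 - ((s - 1 - k : ℕ) : ℝ) / s = ((k : ℝ) + 1) / s := by
    rw [e]; field_simp; ring
  have e2 : 1 - (((s - 1 - k : ℕ) : ℝ) + 1) / s = (k : ℝ) / s := by
    rw [e]; field_simp; ring
  rw [e1, e2]

theorem discretizedBetaEntropy_approx :
    ∃ C > (0 : ℝ), ∀ n s : ℕ, 2 ≤ n → n ≤ s →
      |discretizedBetaEntropy n s -
          (Real.log s - Real.log n + ((n : ℝ) - 1) / n)| ≤
        C * n * Real.log n / s := by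
  refine ⟨20, by norm_num, ?_⟩
  intro n s hn hns
  obtain ⟨l, rfl⟩ : ∃ l, n = l + 2 := ⟨n - 2, by omega⟩
  have hs : 0 < s := by omega
  have hs' : (0 : ℝ) < s := by exact_mod_cast hs
  rw [aux_entropy _ _ hs]
  have ec : ((l + 2 : ℕ) : ℝ) = l + 2 := by push_cast; ring
  rw [ec]
  have t1 : ∑ k ∈ Finset.range s, (auxG l (((k : ℝ) + 1) / s) - auxG l ((k : ℝ) / s)) =
      Real.log (l + 2) - (l + 1 : ℝ) / (l + 2) := by
    have := Finset.sum_range_sub (fun k : ℕ => auxG l ((k : ℝ) / s)) s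
    push_cast at this
    rw [this]
    simp [auxG, div_self hs'.ne']
    ring
  have t2 : ∑ k ∈ Finset.range s, ((((k : ℝ) + 1) / s) ^ (l + 2) - ((k : ℝ) / s) ^ (l + 2)) = 1 := by
    have := Finset.sum_range_sub (fun k : ℕ => ((k : ℝ) / s) ^ (l + 2)) s
    push_cast at this
    rw [this]
    simp [div_self hs'.ne']
  have t3 := Finset.sum_range_sub (fun k : ℕ => ((k : ℝ) / s + 1 / s) ^ (l + 1)) s
  have main : -∑ k ∈ Finset.range s, ((((k : ℝ) + 1) / s) ^ (l + 2) - ((k : ℝ) / s) ^ (l + 2)) *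
        Real.log ((((k : ℝ) + 1) / s) ^ (l + 2) - ((k : ℝ) / s) ^ (l + 2)) -
          (Real.log s - Real.log (l + 2) + ((l : ℝ) + 2 - 1) / (l + 2)) =
      ∑ k ∈ Finset.range s, (auxG l (((k : ℝ) + 1) / s) - auxG l ((k : ℝ) / s) -
      ((((k : ℝ) + 1) / s) ^ (l + 2) - ((k : ℝ) / s) ^ (l + 2)) *
        (Real.log ((((k : ℝ) + 1) / s) ^ (l + 2) - ((k : ℝ) / s) ^ (l + 2)) + Real.log s)) := by
    rw [Finset.sum_sub_distrib, t1]
    simp only [mul_add]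
    rw [Finset.sum_add_distrib, ← Finset.sum_mul, t2]
    ring
  rw [main]
  refine (Finset.abs_sum_le_sum_abs _ _).trans ?_
  refine (Finset.sum_le_sum fun k _ => aux_cell l s k hs).trans ?_
  rw [Finset.sum_add_distrib, ← Finset.mul_sum, t3, Finset.sum_ite_eq' (Finset.range s) 0,
    if_pos (Finset.mem_range.2 hs)]
  have hE : ((s : ℝ) / s + 1 / s) ^ (l + 1) ≤ 3 := by
    rw [div_self hs'.ne']
    have h1 : (1 : ℝ) + 1 / s ≤ Real.exp (1 / s) := by
      have := Real.add_one_le_exp ((1 : ℝ) / s); linarith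
    have h2 : ((1 : ℝ) + 1 / s) ^ (l + 1) ≤ Real.exp (1 / s) ^ (l + 1) :=
      pow_le_pow_left₀ (by positivity) h1 _
    rw [← Real.exp_nat_mul] at h2
    have h3 : ((l + 1 : ℕ) : ℝ) * (1 / s) ≤ 1 := by
      rw [mul_one_div, div_le_one hs']
      exact_mod_cast (by omega : l + 1 ≤ s)
    have h4 := Real.exp_le_exp.2 h3
    linarith [Real.exp_one_lt_d9]
  have h0 : (0 : ℝ) ≤ (((0 : ℕ) : ℝ) / s + 1 / s) ^ (l + 1) := by positivity
  have hlog : (0.69 : ℝ) ≤ Real.log (l + 2) := by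
    have h : Real.log 2 ≤ Real.log (l + 2) := Real.log_le_log (by norm_num) (by simp)
    linarith [Real.log_two_gt_d9]
  calc _ ≤ 2 * ((l : ℝ) + 2) / s * 3 + (l + 2) * (Real.log (l + 2) + 1) / s := by
        gcongr
        linarith
    _ = (l + 2) / s * (Real.log (l + 2) + 7) := by ring
    _ ≤ (l + 2) / s * (20 * Real.log (l + 2)) := by
        gcongr
        linarith
    _ = _ := by ring
end

section
/- There exists a constant C > 0 such that for all integers n and s with 2 ≤ n ≤ s, the entropy H_{B|S} of the discretized Beta(1, n) distribution satisfies |H_{B|S} − (ln s + H_B)| ≤ C · n · (ln n) / s, where H_B = − ∫_0^1 f_n(x) ln f_n(x) dx is the differential entropy of the Beta(1, n) distribution. -/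
/-- The differential entropy (in nats) of the `Beta(1, n)` distribution, whose density
on `[0, 1]` is `f_n x = n * (1 - x)^(n-1)`. -/
noncomputable def betaOneDifferentialEntropy (n : ℕ) : ℝ :=
  -∫ x in (0 : ℝ)..1,
      (n : ℝ) * (1 - x) ^ (n - 1) * Real.log ((n : ℝ) * (1 - x) ^ (n - 1))

lemma cell_bound (f : ℝ → ℝ) (hf : Continuous f) (u v a b q : ℝ) (huv : u < v) (hb : 0 ≤ b)
    (hfb : ∀ x ∈ Set.Icc u v, b ≤ f x ∧ f x ≤ a) (hq : ∫ x in u..v, f x = q) (hq0 : 0 < q) :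
    0 ≤ (∫ x in u..v, f x * Real.log (f x)) - q * Real.log (q / (v - u)) ∧
    (∫ x in u..v, f x * Real.log (f x)) - q * Real.log (q / (v - u)) ≤ (a - b) * (v - u) := by
  have hw : 0 < v - u := sub_pos.2 huv
  set m := q / (v - u) with hm
  have hm0 : 0 < m := div_pos hq0 hw
  have hqm : q = m * (v - u) := by rw [hm]; field_simp
  have hbm : b ≤ m := by
    have h : ∫ x in u..v, b ≤ ∫ x in u..v, f x :=
      intervalIntegral.integral_mono_on huv.le (by simp) (hf.intervalIntegrable _ _)
        (fun x hx => (hfb x hx).1)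
    rw [hq, intervalIntegral.integral_const, smul_eq_mul] at h
    rw [hm, le_div_iff₀ hw]; linarith
  have hfl : Continuous (fun x => f x * Real.log (f x)) := Real.continuous_mul_log.comp hf
  have e1 : ∫ x in u..v, (f x - m) = 0 := by
    rw [intervalIntegral.integral_sub (hf.intervalIntegrable _ _) (by simp), hq,
      intervalIntegral.integral_const, smul_eq_mul, hqm]; ring
  have hfm : Continuous (fun x => f x * Real.log m) := hf.mul continuous_const
  have e2 : ∫ x in u..v, (f x * Real.log (f x) - f x * Real.log m)
      = (∫ x in u..v, f x * Real.log (f x)) - q * Real.log m := by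
    rw [intervalIntegral.integral_sub (hfl.intervalIntegrable _ _)
      (hfm.intervalIntegrable _ _), intervalIntegral.integral_mul_const, hq]
  have e3 : ∫ x in u..v, f x * ((a - b) / m) = (a - b) * (v - u) := by
    rw [intervalIntegral.integral_mul_const, hq, hqm]; field_simp
  have hi2 : IntervalIntegrable (fun x => f x * Real.log (f x) - f x * Real.log m)
      MeasureTheory.volume u v :=
    (hfl.sub (hf.mul continuous_const)).intervalIntegrable _ _
  rw [← e2]
  constructor
  · rw [← e1]
    refine intervalIntegral.integral_mono_on huv.le
      ((hf.sub continuous_const).intervalIntegrable _ _) hi2 (fun x hx => ?_)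
    have h0 : 0 ≤ f x := hb.trans (hfb x hx).1
    rcases h0.eq_or_lt with h | h
    · rw [← h]; simp; exact hm0.le
    · have := Real.log_le_sub_one_of_pos (div_pos hm0 h)
      rw [Real.log_div hm0.ne' h.ne'] at this
      have h2 := mul_le_mul_of_nonneg_left this h0
      have h3 : f x * (m / f x - 1) = m - f x := by field_simp
      linarith
  · rw [← e3]
    refine intervalIntegral.integral_mono_on huv.le hi2
      ((hf.mul continuous_const).intervalIntegrable _ _) (fun x hx => ?_)
    have h0 : 0 ≤ f x := hb.trans (hfb x hx).1
    rcases h0.eq_or_lt with h | h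
    · rw [← h]; simp
    · have := Real.log_le_sub_one_of_pos (div_pos h hm0)
      rw [Real.log_div h.ne' hm0.ne'] at this
      rw [← mul_sub]
      refine mul_le_mul_of_nonneg_left (this.trans ?_) h0
      rw [div_sub_one hm0.ne']
      have := (hfb x hx).2
      gcongr

theorem discretizedBetaEntropy_approx_differential :
    ∃ C > (0 : ℝ), ∀ n s : ℕ, 2 ≤ n → n ≤ s →
      |discretizedBetaEntropy n s - (Real.log s + betaOneDifferentialEntropy n)| ≤
        C * n * Real.log n / s := by
  refine ⟨2, by norm_num, fun n s hn hns => ?_⟩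
  have hs : (0 : ℝ) < s := by exact_mod_cast (by omega : 0 < s)
  have hn0 : (0 : ℝ) < n := by exact_mod_cast (by omega : 0 < n)
  set f : ℝ → ℝ := fun x => (n : ℝ) * (1 - x) ^ (n - 1) with hf
  have hfc : Continuous f := by fun_prop
  set p : ℕ → ℝ := fun i => (i : ℝ) / s with hp
  set q : ℕ → ℝ := fun i => (1 - (i : ℝ) / s) ^ n - (1 - ((i : ℝ) + 1) / s) ^ n with hq
  have hstep : ∀ i, p (i + 1) - p i = 1 / s := by
    intro i; simp only [hp]; push_cast; ring
  have hqp : ∀ i, q i = (1 - p i) ^ n - (1 - p (i + 1)) ^ n := by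
    intro i; simp only [hp, hq]; push_cast; ring
  have hint : ∀ u v : ℝ, ∫ x in u..v, f x = (1 - u) ^ n - (1 - v) ^ n := by
    intro u v
    rw [intervalIntegral.integral_eq_sub_of_hasDerivAt (f := fun x => -(1 - x) ^ n)]
    · ring
    · intro x _
      have := (((hasDerivAt_id x).const_sub 1).pow n).neg
      have h2 : HasDerivAt (fun x : ℝ => -(1 - x) ^ n) _ x := this
      simpa [hf] using h2
    · exact hfc.intervalIntegrable _ _
  have hlt : ∀ i, p i < p (i + 1) := fun i => by
    have := hstep i
    have : 0 < 1 / (s : ℝ) := by positivity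
    linarith
  have hp0 : ∀ i, 0 ≤ p i := fun i => by simp only [hp]; positivity
  have hp1 : ∀ i ∈ Finset.range s, p (i + 1) ≤ 1 := fun i hi => by
    simp only [hp]; rw [div_le_one hs]; exact_mod_cast Finset.mem_range.1 hi
  have hqpos : ∀ i ∈ Finset.range s, 0 < q i := fun i hi => by
    rw [hqp]
    have := pow_lt_pow_left₀ (by linarith [hlt i] : 1 - p (i + 1) < 1 - p i)
      (by linarith [hp1 i hi]) (by omega : n ≠ 0)
    linarith
  have hcell : ∀ i ∈ Finset.range s,
      0 ≤ (∫ x in p i..p (i + 1), f x * Real.log (f x)) - q i * (Real.log (q i) + Real.log s) ∧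
      (∫ x in p i..p (i + 1), f x * Real.log (f x)) - q i * (Real.log (q i) + Real.log s)
        ≤ (f (p i) - f (p (i + 1))) * (1 / s) := by
    intro i hi
    have h1 := hp1 i hi
    have := cell_bound f hfc (p i) (p (i + 1)) (f (p i)) (f (p (i + 1))) (q i) (hlt i)
      (mul_nonneg hn0.le (pow_nonneg (by linarith) _))
      (fun x hx => ⟨mul_le_mul_of_nonneg_left
          (pow_le_pow_left₀ (by linarith) (by linarith [hx.2]) _) hn0.le,
        mul_le_mul_of_nonneg_left
          (pow_le_pow_left₀ (by linarith [hx.2]) (by linarith [hx.1]) _) hn0.le⟩)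
      (by rw [hint, hqp]) (hqpos i hi)
    rw [hstep, div_div_eq_mul_div, div_one, Real.log_mul (hqpos i hi).ne' hs.ne'] at this
    exact this
  have hfl : Continuous (fun x => f x * Real.log (f x)) := Real.continuous_mul_log.comp hfc
  have hsumI : ∑ i ∈ Finset.range s, ∫ x in p i..p (i + 1), f x * Real.log (f x)
      = ∫ x in (0:ℝ)..1, f x * Real.log (f x) := by
    rw [intervalIntegral.sum_integral_adjacent_intervals
      (fun i _ => hfl.intervalIntegrable _ _)]
    simp [hp, hs.ne']
  have hsumq : ∑ i ∈ Finset.range s, q i = 1 := by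
    simp only [hqp]
    rw [Finset.sum_range_sub' (fun i => (1 - p i) ^ n)]
    have : n ≠ 0 := by omega
    simp [hp, hs.ne', this]
  have hsumf : ∑ i ∈ Finset.range s, (f (p i) - f (p (i + 1))) * (1 / (s : ℝ)) = n / s := by
    rw [← Finset.sum_mul, Finset.sum_range_sub' (fun i => f (p i))]
    have : n - 1 ≠ 0 := by omega
    simp [hp, hf, hs.ne', this, div_eq_mul_inv]
  have hD : discretizedBetaEntropy n s - (Real.log s + betaOneDifferentialEntropy n)
      = ∑ i ∈ Finset.range s, ((∫ x in p i..p (i + 1), f x * Real.log (f x))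
        - q i * (Real.log (q i) + Real.log s)) := by
    rw [Finset.sum_sub_distrib, hsumI]
    simp only [mul_add]
    rw [Finset.sum_add_distrib, ← Finset.sum_mul, hsumq]
    simp only [discretizedBetaEntropy, betaOneDifferentialEntropy, hq, hf]
    ring
  rw [hD, abs_of_nonneg (Finset.sum_nonneg fun i hi => (hcell i hi).1)]
  refine (Finset.sum_le_sum fun i hi => (hcell i hi).2).trans ?_
  rw [hsumf]
  have hlog : (1 : ℝ) / 2 ≤ Real.log n := by
    have h2 : Real.log 2 ≤ Real.log n := Real.log_le_log (by norm_num) (by exact_mod_cast hn)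
    linarith [Real.log_two_gt_d9]
  gcongr
  nlinarith
end

section
/- There exists a constant C > 0 such that for all integers k, n, s with 2 ≤ k < n ≤ s, the entropy H_{K|N} of the distribution of the set of k least elements of a uniformly random n-element subset of {1, ..., s} satisfies |H_{K|N} − k·(ln s − ln(n + 1) + 1)| ≤ C · ( k·n·(ln n)/s + ln k ). -/
/-- `pj k n s j` is the probability that the `k`-th smallest element of a uniformly random
`n`-element subset of `{1, ..., s}` equals `j`. -/
noncomputable def pj (k n s j : ℕ) : ℝ :=
  ((j - 1).choose (k - 1) * (s - j).choose (n - k) : ℝ) / (s.choose n : ℝ)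

/-- `pk k j` is the conditional probability of each particular `k`-element subset whose maximum
is `j`, given that the `k`-th smallest element of the random `n`-element subset is `j`. -/
noncomputable def pkGiven (k j : ℕ) : ℝ :=
  1 / ((j - 1).choose (k - 1) : ℝ)

/-- The entropy (in nats) of the distribution of the set of `k` least elements of a uniformly
random `n`-element subset of `{1, ..., s}`. -/
noncomputable def leastKEntropy (k n s : ℕ) : ℝ :=
  -∑ j ∈ Finset.Icc k s, pj k n s j * Real.log (pj k n s j * pkGiven k j)

open Finset in
theorem aux_vander (a b s : ℕ) :
    ∑ j ∈ range (s + 1), j.choose a * (s - j).choose b = (s + 1).choose (a + b + 1) := by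
  induction s generalizing b with
  | zero =>
    rcases a with _ | a <;> rcases b with _ | b <;> simp [Nat.choose_eq_zero_of_lt]
  | succ s ih =>
    rcases b with _ | b
    · have h := ih 0
      simp only [Nat.choose_zero_right, mul_one, add_zero] at h ⊢
      rw [sum_range_succ, h, Nat.choose_succ_succ (s + 1) a]
      ring
    · rw [sum_range_succ]
      have h1 : ∀ j ∈ range (s + 1), j.choose a * (s + 1 - j).choose (b + 1)
          = j.choose a * (s - j).choose b + j.choose a * (s - j).choose (b + 1) := by
        intro j hj
        have : s + 1 - j = (s - j) + 1 := by
          have := mem_range.1 hj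
          omega
        rw [this, Nat.choose_succ_succ]
        ring
      rw [sum_congr rfl h1, sum_add_distrib, ih b, ih (b + 1)]
      simp only [Nat.sub_self, Nat.choose_zero_succ, mul_zero, add_zero]
      rw [show a + (b + 1) + 1 = (a + b + 1) + 1 by ring, Nat.choose_succ_succ (s + 1)]

open Finset in
theorem aux_sum (k n s : ℕ) (hk : 1 ≤ k) (hkn : k ≤ n) (hns : n ≤ s) :
    ∑ j ∈ Icc k s, (j - 1).choose (k - 1) * (s - j).choose (n - k) = s.choose n := by
  have h := aux_vander (k - 1) (n - k) (s - 1)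
  rw [show s - 1 + 1 = s by omega, show k - 1 + (n - k) + 1 = n by omega] at h
  rw [← h]
  have e : ∑ j ∈ Icc k s, (j - 1).choose (k - 1) * (s - j).choose (n - k)
      = ∑ j ∈ Ico 1 (s + 1), (j - 1).choose (k - 1) * (s - j).choose (n - k) := by
    apply sum_subset
    · intro j hj
      simp only [mem_Icc, mem_Ico] at *
      omega
    · intro j hj hj'
      simp only [mem_Icc, mem_Ico] at *
      rw [Nat.choose_eq_zero_of_lt (by omega : j - 1 < k - 1)]
      simp
  rw [e, sum_Ico_eq_sum_range]
  apply sum_congr rfl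
  intro i _
  rw [show 1 + i - 1 = i by omega, show s - (1 + i) = s - 1 - i by omega]

open Finset in
theorem aux_mean (k n s : ℕ) (hk : 1 ≤ k) (hkn : k ≤ n) :
    ∑ j ∈ Icc k s, j * ((j - 1).choose (k - 1) * (s - j).choose (n - k))
      = k * (s + 1).choose (n + 1) := by
  have h := aux_vander k (n - k) s
  rw [show k + (n - k) + 1 = n + 1 by omega] at h
  rw [← h, mul_sum]
  have hsub : Icc k s ⊆ range (s + 1) := by
    intro j hj
    simp only [mem_Icc, mem_range] at *
    omega
  rw [← sum_subset hsub (f := fun j => k * (j.choose k * (s - j).choose (n - k)))]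
  · apply sum_congr rfl
    intro j hj
    simp only [mem_Icc] at hj
    obtain ⟨j, rfl⟩ : ∃ i, j = i + 1 := ⟨j - 1, by omega⟩
    obtain ⟨k, rfl⟩ : ∃ i, k = i + 1 := ⟨k - 1, by omega⟩
    simp only [Nat.add_sub_cancel]
    have := Nat.add_one_mul_choose_eq j k
    rw [← mul_assoc, this]
    ring
  · intro j hj hj'
    simp only [mem_Icc, mem_range] at *
    rw [Nat.choose_eq_zero_of_lt (by omega : j < k)]
    simp

theorem aux_desc (a b m : ℕ) (h : a ≤ b) :
    a.descFactorial m * b ^ m ≤ b.descFactorial m * a ^ m := by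
  induction m with
  | zero => simp
  | succ m ih =>
    rw [Nat.descFactorial_succ, Nat.descFactorial_succ, pow_succ, pow_succ]
    have h1 : (a - m) * b ≤ (b - m) * a := by
      rw [Nat.sub_mul, Nat.sub_mul, mul_comm b a]
      exact Nat.sub_le_sub_left (Nat.mul_le_mul_left m h) _
    calc (a - m) * a.descFactorial m * (b ^ m * b)
        = ((a - m) * b) * (a.descFactorial m * b ^ m) := by ring
      _ ≤ ((b - m) * a) * (b.descFactorial m * a ^ m) := Nat.mul_le_mul h1 ih
      _ = _ := by ring

theorem aux_choose (k n s j : ℕ) (hkn : k ≤ n) (hkj : k ≤ j) :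
    (s - j).choose (n - k) * ((s - k) ^ n * (n - k).factorial)
      ≤ s.choose n * (n.factorial * (s - j) ^ (n - k)) := by
  have e1 := Nat.descFactorial_eq_factorial_mul_choose s n
  have e2 := Nat.descFactorial_eq_factorial_mul_choose (s - j) (n - k)
  have e3 := Nat.descFactorial_mul_descFactorial (n := s) hkn
  have h1 := aux_desc (s - j) (s - k) (n - k) (by omega)
  have h2 : (s - k) ^ k ≤ s.descFactorial k :=
    (Nat.pow_le_pow_left (by omega) k).trans (Nat.pow_sub_le_descFactorial s k)
  have h3 := Nat.mul_le_mul h1 h2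
  have e4 : (s - k) ^ n = (s - k) ^ (n - k) * (s - k) ^ k := by
    rw [← pow_add]
    congr 1
    omega
  calc _ = (s - j).descFactorial (n - k) * (s - k) ^ (n - k) * (s - k) ^ k := by
        rw [e2, e4]; ring
    _ ≤ _ := h3
    _ = ((s - k).descFactorial (n - k) * s.descFactorial k) * (s - j) ^ (n - k) := by ring
    _ = _ := by rw [e3, e1]; ring

theorem aux_fact (m n : ℕ) (h : m ≤ n) :
    Real.log n.factorial - (n + 1) * Real.log (n + 1) + n
      ≤ Real.log m.factorial - (m + 1) * Real.log (m + 1) + m := by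
  induction n, h using Nat.le_induction with
  | base => exact le_rfl
  | succ n hn ih =>
    refine le_trans ?_ ih
    rw [Nat.factorial_succ]
    push_cast
    have hp : (0 : ℝ) < n + 1 := by positivity
    have hp2 : (0 : ℝ) < (n : ℝ) + 1 + 1 := by positivity
    have hf : (0 : ℝ) < n.factorial := by positivity
    rw [Real.log_mul hp.ne' hf.ne']
    have h1 := Real.log_le_sub_one_of_pos (x := ((n : ℝ) + 1) / (n + 1 + 1)) (by positivity)
    rw [Real.log_div hp.ne' hp2.ne'] at h1
    have h2 : ((n : ℝ) + 1) / (n + 1 + 1) - 1 = -1 / (n + 1 + 1) := by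
      field_simp
      ring
    rw [h2, le_div_iff₀ hp2] at h1
    nlinarith

open Finset in
theorem aux_negbin (k s : ℕ) (hk : 1 ≤ k) (p : ℝ) (hp0 : 0 < p) (hp1 : p < 1) :
    ∑ j ∈ Icc k s, ((j - 1).choose (k - 1) : ℝ) * (p ^ k * (1 - p) ^ (j - k)) ≤ 1 := by
  have hr : ‖1 - p‖ < 1 := by
    rw [Real.norm_eq_abs, abs_lt]
    constructor <;> linarith
  have h := hasSum_choose_mul_geometric_of_norm_lt_one (k - 1) hr
  rw [show k - 1 + 1 = k by omega, show 1 - (1 - p) = p by ring] at h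
  have h2 := sum_le_hasSum (range (s + 1 - k)) (fun i _ => by
    have : 0 ≤ 1 - p := by linarith
    positivity) h
  have e : ∑ j ∈ Icc k s, ((j - 1).choose (k - 1) : ℝ) * (p ^ k * (1 - p) ^ (j - k))
      = p ^ k * ∑ i ∈ range (s + 1 - k), ((i + (k - 1)).choose (k - 1) : ℝ) * (1 - p) ^ i := by
    rw [← Finset.Ico_add_one_right_eq_Icc, sum_Ico_eq_sum_range, mul_sum]
    apply sum_congr rfl
    intro i _
    rw [show k + i - 1 = i + (k - 1) by omega, show k + i - k = i by omega]
    ring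
  rw [e]
  have hpk : 0 < p ^ k := by positivity
  calc _ ≤ p ^ k * (1 / p ^ k) := by gcongr
    _ = 1 := by field_simp

theorem pj_nonneg' (k n s j : ℕ) : 0 ≤ pj k n s j := by
  unfold pj
  positivity

open Finset in
theorem pj_sum (k n s : ℕ) (hk : 1 ≤ k) (hkn : k ≤ n) (hns : n ≤ s) :
    ∑ j ∈ Icc k s, pj k n s j = 1 := by
  unfold pj
  rw [← sum_div]
  have h := aux_sum k n s hk hkn hns
  have hc : (0 : ℝ) < s.choose n := by exact_mod_cast Nat.choose_pos hns
  rw [div_eq_one_iff_eq hc.ne']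
  exact_mod_cast h

open Finset in
theorem pj_mean (k n s : ℕ) (hk : 1 ≤ k) (hkn : k ≤ n) (hns : n ≤ s) :
    ∑ j ∈ Icc k s, pj k n s j * j = k * (s + 1) / (n + 1) := by
  unfold pj
  have h : ∑ j ∈ Icc k s, (j : ℝ) * ((j - 1).choose (k - 1) * (s - j).choose (n - k) : ℝ)
      = k * (s + 1).choose (n + 1) := by exact_mod_cast aux_mean k n s hk hkn
  have hc : (0 : ℝ) < s.choose n := by exact_mod_cast Nat.choose_pos hns
  have h2 : ((s : ℝ) + 1) * s.choose n = (s + 1).choose (n + 1) * (n + 1) := by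
    exact_mod_cast Nat.add_one_mul_choose_eq s n
  have e : ∑ j ∈ Icc k s, ((j - 1).choose (k - 1) * (s - j).choose (n - k) : ℝ) / s.choose n * j
      = (∑ j ∈ Icc k s, (j : ℝ) * ((j - 1).choose (k - 1) * (s - j).choose (n - k) : ℝ))
        / s.choose n := by
    rw [sum_div]
    apply sum_congr rfl
    intro j _
    ring
  rw [e, h, div_eq_div_iff hc.ne' (by positivity)]
  linear_combination (-(k : ℝ)) * h2

/-- basic facts when the weight is nonzero -/
theorem pj_pos_facts (k n s j : ℕ) (hns : n ≤ s) (h : pj k n s j ≠ 0) :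
    0 < ((j - 1).choose (k - 1) : ℝ) ∧ 0 < ((s - j).choose (n - k) : ℝ) ∧
    0 < (s.choose n : ℝ) ∧
    pj k n s j * pkGiven k j = ((s - j).choose (n - k) : ℝ) / s.choose n := by
  unfold pj at *
  unfold pkGiven
  have h1 : ((j - 1).choose (k - 1) : ℝ) ≠ 0 := by
    intro h0
    simp [h0] at h
  have h2 : ((s - j).choose (n - k) : ℝ) ≠ 0 := by
    intro h0
    simp [h0] at h
  have hc : (0 : ℝ) < s.choose n := by exact_mod_cast Nat.choose_pos hns
  refine ⟨by positivity, by positivity, hc, ?_⟩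
  field_simp

open Finset in
theorem ent_nonneg (k n s : ℕ) (hk : 1 ≤ k) (hkn : k ≤ n) (hns : n ≤ s) :
    0 ≤ leastKEntropy k n s := by
  unfold leastKEntropy
  rw [neg_nonneg]
  apply sum_nonpos
  intro j hj
  by_cases h0 : pj k n s j = 0
  · simp [h0]
  obtain ⟨h1, h2, h3, h4⟩ := pj_pos_facts k n s j hns h0
  apply mul_nonpos_of_nonneg_of_nonpos (pj_nonneg' _ _ _ _)
  rw [h4]
  apply Real.log_nonpos (by positivity)
  rw [div_le_one h3]
  have := aux_sum k n s hk hkn hns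
  have h5 := single_le_sum (f := fun j => (j - 1).choose (k - 1) * (s - j).choose (n - k))
    (fun _ _ => Nat.zero_le _) hj
  rw [this] at h5
  have h6 : 1 ≤ (j - 1).choose (k - 1) := by exact_mod_cast h1
  have : (s - j).choose (n - k) ≤ s.choose n := by
    refine le_trans ?_ h5
    exact Nat.le_mul_of_pos_left _ h6
  exact_mod_cast this

open Finset in
theorem ent_upper (k n s : ℕ) (hk : 1 ≤ k) (hkn : k ≤ n) (hns : n < s) :
    leastKEntropy k n s ≤ k * (Real.log (s + 1) - Real.log (n + 1) + 1) := by
  obtain ⟨p, hp⟩ : ∃ p : ℝ, p = (n + 1) / (s + 1) := ⟨_, rfl⟩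
  have hns' : (n : ℝ) < s := by exact_mod_cast hns
  have hp0 : 0 < p := by rw [hp]; positivity
  have hp1 : p < 1 := by
    rw [hp, div_lt_one (by positivity)]
    linarith
  have hq : 0 < 1 - p := by linarith
  have key : ∀ j ∈ Icc k s, -(pj k n s j * Real.log (pj k n s j * pkGiven k j))
      ≤ (pj k n s j * (-k * Real.log p + k * Real.log (1 - p) - 1)
          + pj k n s j * j * (- Real.log (1 - p)))
        + ((j - 1).choose (k - 1) : ℝ) * (p ^ k * (1 - p) ^ (j - k)) := by
    intro j hj
    have hkj := (mem_Icc.1 hj).1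
    by_cases h0 : pj k n s j = 0
    · simp only [h0]
      simp
      positivity
    obtain ⟨h1, h2, h3, h4⟩ := pj_pos_facts k n s j hns.le h0
    have hw : pj k n s j = ((j - 1).choose (k - 1) : ℝ) * (pj k n s j * pkGiven k j) := by
      unfold pkGiven
      field_simp
    have hwp : 0 < pj k n s j := lt_of_le_of_ne (pj_nonneg' _ _ _ _) (Ne.symm h0)
    obtain ⟨P, hP⟩ : ∃ P, P = pj k n s j * pkGiven k j := ⟨_, rfl⟩
    have hPpos : 0 < P := by rw [hP, h4]; positivity
    rw [← hP] at hw ⊢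
    obtain ⟨q, hqq⟩ : ∃ q, q = p ^ k * (1 - p) ^ (j - k) := ⟨_, rfl⟩
    have hqpos : 0 < q := by rw [hqq]; positivity
    have hlq : Real.log q = k * Real.log p + ((j : ℝ) - k) * Real.log (1 - p) := by
      rw [hqq, Real.log_mul (by positivity) (by positivity), Real.log_pow, Real.log_pow,
        Nat.cast_sub hkj]
    have hl := Real.log_le_sub_one_of_pos (div_pos hqpos hPpos)
    rw [Real.log_div hqpos.ne' hPpos.ne'] at hl
    have hm := mul_le_mul_of_nonneg_left hl hwp.le
    have e : pj k n s j * (q / P - 1) = ((j - 1).choose (k - 1) : ℝ) * q - pj k n s j := by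
      rw [mul_sub, mul_one]
      congr 1
      rw [hw]
      field_simp
    rw [e, hlq] at hm
    rw [← hqq]
    nlinarith
  unfold leastKEntropy
  rw [← sum_neg_distrib]
  refine (sum_le_sum key).trans ?_
  rw [sum_add_distrib, sum_add_distrib, ← sum_mul, ← sum_mul, pj_sum k n s hk hkn hns.le,
    pj_mean k n s hk hkn hns.le]
  have hnb := aux_negbin k s hk p hp0 hp1
  have e1 : (k : ℝ) * (s + 1) / (n + 1) = k * (1 / p) := by
    rw [hp]
    field_simp
  have e2 : Real.log p = Real.log (n + 1) - Real.log (s + 1) := by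
    rw [hp, Real.log_div (by positivity) (by positivity)]
  have e3 : (1 / p - 1) * (- Real.log (1 - p)) ≤ 1 := by
    have h := Real.log_le_sub_one_of_pos (x := 1 / (1 - p)) (by positivity)
    rw [one_div, Real.log_inv] at h
    have h6 : 0 ≤ 1 / p - 1 := by
      rw [sub_nonneg, le_div_iff₀ hp0]
      linarith
    calc _ ≤ (1 / p - 1) * ((1 - p)⁻¹ - 1) := mul_le_mul_of_nonneg_left h h6
      _ = 1 := by
        field_simp
        ring
  rw [e1]
  have hk0 : (0 : ℝ) ≤ k := by positivity
  have e4 := mul_le_mul_of_nonneg_left e3 hk0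
  rw [show Real.log (s + 1) - Real.log (n + 1) = - Real.log p by rw [e2]; ring]
  nlinarith

open Finset in
theorem ent_lower (k n s : ℕ) (hk : 1 ≤ k) (hkn : k < n) (hns : n < s) :
    n * Real.log ((s : ℝ) - k) + Real.log (n - k).factorial - Real.log n.factorial
      - (n - k) * (Real.log s + Real.log (n - k + 1) - Real.log (n + 1))
      ≤ leastKEntropy k n s := by
  have hkn' : (k : ℝ) + 1 ≤ n := by exact_mod_cast hkn
  have hns' : (n : ℝ) + 1 ≤ s := by exact_mod_cast hns
  have hk0 : (0 : ℝ) ≤ k := by positivity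
  have hsk : (0 : ℝ) < (s : ℝ) - k := by linarith
  have hs0 : (0 : ℝ) < s := by linarith
  have hm1 : (0 : ℝ) < (n : ℝ) - k + 1 := by linarith
  obtain ⟨μ, hμ⟩ : ∃ μ : ℝ, μ = s * (n - k + 1) / (n + 1) := ⟨_, rfl⟩
  have hμ0 : 0 < μ := by rw [hμ]; positivity
  have hlμ : Real.log μ = Real.log s + Real.log (n - k + 1) - Real.log (n + 1) := by
    rw [hμ, Real.log_div (by positivity) (by positivity), Real.log_mul hs0.ne' hm1.ne']
  rw [← hlμ]
  have key : ∀ j ∈ Icc k s, pj k n s j * (n * Real.log ((s : ℝ) - k)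
        + Real.log (n - k).factorial - Real.log n.factorial
        - (n - k) * (Real.log μ + s / μ - 1)) + pj k n s j * j * ((n - k) / μ)
      ≤ -(pj k n s j * Real.log (pj k n s j * pkGiven k j)) := by
    intro j hj
    obtain ⟨hkj, hjs⟩ := mem_Icc.1 hj
    by_cases h0 : pj k n s j = 0
    · simp [h0]
    obtain ⟨h1, h2, h3, h4⟩ := pj_pos_facts k n s j hns.le h0
    have hwp : 0 ≤ pj k n s j := pj_nonneg' _ _ _ _
    rw [h4, Real.log_div h2.ne' h3.ne']
    have hlt : n - k ≤ s - j := by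
      by_contra hcon
      rw [Nat.choose_eq_zero_of_lt (by omega)] at h2
      simp at h2
    have hjs' : (0 : ℝ) < (s : ℝ) - j := by
      have : j < s := by omega
      have : (j : ℝ) < s := by exact_mod_cast this
      linarith
    have hA : ((s - j).choose (n - k) : ℝ) * (((s : ℝ) - k) ^ n * (n - k).factorial)
      ≤ s.choose n * (n.factorial * ((s : ℝ) - j) ^ (n - k)) := by
      have := aux_choose k n s j hkn.le hkj
      rw [← Nat.cast_sub hjs, ← Nat.cast_sub (by omega : k ≤ s)]
      exact_mod_cast this
    have hf1 : (0 : ℝ) < (n - k).factorial := by positivity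
    have hf2 : (0 : ℝ) < n.factorial := by positivity
    have hB := Real.log_le_log (by positivity) hA
    rw [Real.log_mul h2.ne' (by positivity), Real.log_mul (by positivity) hf1.ne',
      Real.log_mul h3.ne' (by positivity), Real.log_mul hf2.ne' (by positivity),
      Real.log_pow, Real.log_pow, Nat.cast_sub hkn.le] at hB
    have hC := Real.log_le_sub_one_of_pos (div_pos hjs' hμ0)
    rw [Real.log_div hjs'.ne' hμ0.ne'] at hC
    have hD := mul_le_mul_of_nonneg_left hC (by linarith : (0 : ℝ) ≤ n - k)
    have hE : n * Real.log ((s : ℝ) - k)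
        + Real.log (n - k).factorial - Real.log n.factorial
        - (n - k) * (Real.log μ + s / μ - 1) + j * ((n - k) / μ)
        ≤ -(Real.log ((s - j).choose (n - k)) - Real.log (s.choose n)) := by
      have : ((n : ℝ) - k) * (((s : ℝ) - j) / μ - 1)
          = (n - k) * (s / μ - 1) - j * ((n - k) / μ) := by
        field_simp
        ring
      rw [this] at hD
      linarith
    have := mul_le_mul_of_nonneg_left hE hwp
    linarith
  unfold leastKEntropy
  rw [← sum_neg_distrib]
  refine le_trans ?_ (sum_le_sum key)
  rw [sum_add_distrib, ← sum_mul, ← sum_mul, pj_sum k n s hk hkn.le hns.le,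
    pj_mean k n s hk hkn.le hns.le]
  have hF : 0 ≤ (n - k) * ((k * (s + 1) / (n + 1) - s) / μ + 1) := by
    apply mul_nonneg (by linarith)
    have : -μ ≤ (k : ℝ) * (s + 1) / (n + 1) - s := by
      rw [hμ, ← sub_nonneg]
      have : (k : ℝ) * (s + 1) / (n + 1) - s - -(s * (n - k + 1) / (n + 1)) = k / (n + 1) := by
        field_simp
        ring
      rw [this]
      positivity
    have h2 := (div_le_div_iff_of_pos_right hμ0).2 this
    rw [neg_div, div_self hμ0.ne'] at h2
    linarith
  have hG : ((n : ℝ) - k) * ((k * (s + 1) / (n + 1) - s) / μ + 1)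
      = k * (s + 1) / (n + 1) * ((n - k) / μ) - (n - k) * (s / μ - 1) := by
    ring
  rw [hG] at hF
  linarith

theorem leastKEntropy_approx :
    ∃ C > (0 : ℝ), ∀ k n s : ℕ, 2 ≤ k → k < n → n ≤ s →
      |leastKEntropy k n s - (k : ℝ) * (Real.log s - Real.log ((n : ℝ) + 1) + 1)| ≤
        C * ((k : ℝ) * n * Real.log n / s + Real.log k) := by
  refine ⟨4, by norm_num, ?_⟩
  intro k n s hk hkn hns
  have hk' : (2 : ℝ) ≤ k := by exact_mod_cast hk
  have hkn' : (k : ℝ) + 1 ≤ n := by exact_mod_cast hkn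
  have hns' : (n : ℝ) ≤ s := by exact_mod_cast hns
  have hs0 : (0 : ℝ) < s := by linarith
  have hn0 : (0 : ℝ) < n := by linarith
  have hln : 1 ≤ Real.log n := by
    rw [Real.le_log_iff_exp_le hn0]
    have := Real.exp_one_lt_d9
    linarith
  have hlk : 0 ≤ Real.log k := Real.log_nonneg (by linarith)
  have hE1 : (k : ℝ) * n / s ≤ k * n * Real.log n / s := by
    apply div_le_div_of_nonneg_right _ hs0.le
    have : (0 : ℝ) ≤ k * n := by positivity
    nlinarith
  have hE0 : 0 ≤ (k : ℝ) * n / s := by positivity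
  rw [abs_le]
  constructor
  · -- lower bound
    by_cases hcase : 2 * n ≤ s
    · have hc' : 2 * (n : ℝ) ≤ s := by exact_mod_cast hcase
      have hL := ent_lower k n s (by omega) hkn (by omega)
      have hF := aux_fact (n - k) n (by omega)
      rw [Nat.cast_sub hkn.le] at hF
      have hsk : (0 : ℝ) < (s : ℝ) - k := by linarith
      have h1 : n * (Real.log s - Real.log ((s : ℝ) - k)) ≤ 2 * (k * n / s) := by
        have h := Real.log_le_sub_one_of_pos (x := (s : ℝ) / (s - k)) (by positivity)
        rw [Real.log_div hs0.ne' hsk.ne'] at h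
        have h2 : (s : ℝ) / (s - k) - 1 ≤ 2 * k / s := by
          rw [div_sub_one hsk.ne', div_le_div_iff₀ hsk hs0]
          nlinarith
        calc _ ≤ (n : ℝ) * (2 * k / s) := mul_le_mul_of_nonneg_left (h.trans h2) hn0.le
          _ = _ := by ring
      have hm1 : (0 : ℝ) < (n : ℝ) - k + 1 := by linarith
      have h2 : Real.log (n + 1) - Real.log (n - k + 1) ≤ 2 * Real.log k := by
        rw [← Real.log_div (by positivity) hm1.ne']
        have : 2 * Real.log k = Real.log ((k : ℝ) ^ 2) := by
          rw [Real.log_pow]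
          norm_num
        rw [this]
        apply Real.log_le_log (by positivity)
        rw [div_le_iff₀ hm1]
        nlinarith [mul_nonneg (by linarith : (0 : ℝ) ≤ k - 2) (by linarith : (0 : ℝ) ≤ n - k - 1)]
      nlinarith
    · have hc' : (s : ℝ) < 2 * n := by
        push Not at hcase
        exact_mod_cast hcase
      have h0 := ent_nonneg k n s (by omega) hkn.le hns
      have h1 : Real.log s - Real.log ((n : ℝ) + 1) ≤ 1 := by
        rw [← Real.log_div hs0.ne' (by positivity)]
        have h := Real.log_le_sub_one_of_pos (x := (s : ℝ) / (n + 1)) (by positivity)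
        have : (s : ℝ) / (n + 1) ≤ 2 := by
          rw [div_le_iff₀ (by positivity)]
          linarith
        linarith
      have h2 : (k : ℝ) ≤ 2 * (k * n / s) := by
        rw [← mul_div_assoc, le_div_iff₀ hs0]
        nlinarith
      nlinarith
  · rcases hns.lt_or_eq with hlt | heq
    · have hU := ent_upper k n s (by omega) hkn.le hlt
      have h1 : Real.log (s + 1) - Real.log s ≤ 1 / s := by
        rw [← Real.log_div (by positivity) hs0.ne']
        have h := Real.log_le_sub_one_of_pos (x := ((s : ℝ) + 1) / s) (by positivity)
        have : ((s : ℝ) + 1) / s - 1 = 1 / s := by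
          field_simp
          ring
        linarith
      have h2 : (k : ℝ) * (1 / s) ≤ k * n / s := by
        rw [mul_one_div]
        apply div_le_div_of_nonneg_right _ hs0.le
        nlinarith
      have h3 := mul_le_mul_of_nonneg_left h1 (by linarith : (0 : ℝ) ≤ k)
      linarith
    · subst heq
      have h0 : leastKEntropy k n n ≤ 0 := by
        unfold leastKEntropy
        rw [neg_nonpos]
        apply Finset.sum_nonneg
        intro j hj
        by_cases h0 : pj k n n j = 0
        · simp [h0]
        obtain ⟨h1, h2, h3, h4⟩ := pj_pos_facts k n n j le_rfl h0
        apply mul_nonneg (pj_nonneg' _ _ _ _)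
        rw [h4]
        apply Real.log_nonneg
        rw [Nat.choose_self, Nat.cast_one, div_one]
        have : 0 < (n - j).choose (n - k) := by exact_mod_cast h2
        exact_mod_cast this
      have h1 : Real.log ((n : ℝ) + 1) - Real.log n ≤ 1 := by
        rw [← Real.log_div (by positivity) hn0.ne']
        have h := Real.log_le_sub_one_of_pos (x := ((n : ℝ) + 1) / n) (by positivity)
        have : ((n : ℝ) + 1) / n ≤ 2 := by
          rw [div_le_iff₀ hn0]
          linarith
        linarith
      have h2 : 0 ≤ (k : ℝ) * (Real.log n - Real.log ((n : ℝ) + 1) + 1) :=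
        mul_nonneg (by linarith) (by linarith)
      linarith
end

section
/- There exists a constant C > 0 such that for all integers k and n with 2 ≤ k < n, the differential entropy H of the Beta(k, n − k + 1) distribution satisfies |H + ln(n + 1)| ≤ C · ln k. -/
/-- The density of the `Beta(α, β)` distribution on `[0, 1]`, for real parameters `α, β`. -/
noncomputable def betaDensity (α β : ℝ) (x : ℝ) : ℝ :=
  x ^ (α - 1) * (1 - x) ^ (β - 1) / ∫ t in (0 : ℝ)..1, t ^ (α - 1) * (1 - t) ^ (β - 1)

/-- The differential entropy (in nats) of the `Beta(α, β)` distribution. -/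
noncomputable def betaDifferentialEntropy (α β : ℝ) : ℝ :=
  -∫ x in (0 : ℝ)..1, betaDensity α β x * Real.log (betaDensity α β x)

lemma ent_J_rec (a b : ℕ) :
    ((a : ℝ) + b + 2) * (∫ x in (0 : ℝ)..1, x ^ (a + 1) * (1 - x) ^ b) =
      ((a : ℝ) + 1) * ∫ x in (0 : ℝ)..1, x ^ a * (1 - x) ^ b := by
  have h1 : ∫ x in (0 : ℝ)..1, (((a : ℝ) + 1) * (x ^ a * (1 - x) ^ b)
      - ((a : ℝ) + b + 2) * (x ^ (a + 1) * (1 - x) ^ b)) =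
      (1 : ℝ) ^ (a + 1) * (1 - 1) ^ (b + 1) - (0 : ℝ) ^ (a + 1) * (1 - 0) ^ (b + 1) := by
    apply intervalIntegral.integral_eq_sub_of_hasDerivAt
      (f := fun x : ℝ => x ^ (a + 1) * (1 - x) ^ (b + 1))
    · intro x _
      have h := (hasDerivAt_pow (a + 1) x).mul
        (((hasDerivAt_id x).const_sub 1).pow (b + 1))
      convert! h using 1
      simp only [id, Nat.add_sub_cancel, Pi.pow_apply]
      push_cast
      ring
    · exact Continuous.intervalIntegrable (by fun_prop) _ _
  rw [intervalIntegral.integral_sub (Continuous.intervalIntegrable (by fun_prop) _ _)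
    (Continuous.intervalIntegrable (by fun_prop) _ _), intervalIntegral.integral_const_mul,
    intervalIntegral.integral_const_mul] at h1
  simp at h1
  linarith

lemma ent_J_val (a b : ℕ) :
    ((a : ℝ) + b + 1) * ((a + b).choose a : ℝ) *
      (∫ x in (0 : ℝ)..1, x ^ a * (1 - x) ^ b) = 1 := by
  induction a with
  | zero =>
    have : ∫ x in (0 : ℝ)..1, (1 - x) ^ b = ∫ x in (0 : ℝ)..1, x ^ b := by
      rw [intervalIntegral.integral_comp_sub_left (fun x : ℝ => x ^ b) 1]
      simp
    simp only [pow_zero, one_mul, this]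
    rw [integral_pow]
    have : (b : ℝ) + 1 ≠ 0 := by positivity
    simp
    field_simp
  | succ a ih =>
    have h := ent_J_rec a b
    have hc : ((a + b + 1 : ℕ) : ℝ) * ((a + b).choose a : ℝ) =
        ((a + b + 1).choose (a + 1) : ℝ) * ((a + 1 : ℕ) : ℝ) := by
      exact_mod_cast Nat.add_one_mul_choose_eq (a + b) a
    have e : a + 1 + b = a + b + 1 := by ring
    rw [e]
    push_cast at hc ⊢
    linear_combination ih + ((a + b + 1).choose (a + 1) : ℝ) * h -
      (∫ x in (0 : ℝ)..1, x ^ a * (1 - x) ^ b) * hc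

lemma ent_binom (a b : ℕ) (x : ℝ) (h0 : 0 ≤ x) (h1 : x ≤ 1) :
    ((a + b).choose a : ℝ) * (x ^ a * (1 - x) ^ b) ≤ 1 := by
  have h := add_pow x (1 - x) (a + b)
  have h2 : (1 : ℝ) - x ≥ 0 := by linarith
  have h3 := Finset.single_le_sum
    (f := fun m => x ^ m * (1 - x) ^ (a + b - m) * ((a + b).choose m : ℝ))
    (s := Finset.range (a + b + 1)) (fun i _ => by positivity)
    (Finset.mem_range.2 (show a < a + b + 1 by omega))
  rw [← h] at h3
  simp at h3
  linarith

lemma ent_main (a b : ℕ) (J : ℝ) (hJ : J = ∫ x in (0 : ℝ)..1, x ^ a * (1 - x) ^ b)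
    (g : ℝ → ℝ) (hg : g = fun x => x ^ a * (1 - x) ^ b / J) :
    (∫ x in (0 : ℝ)..1, g x * Real.log (g x)) ≤ Real.log ((a : ℝ) + b + 1) ∧
    Real.log ((a : ℝ) + b + 2) - Real.log ((a : ℝ) + 1) - 1 ≤
      ∫ x in (0 : ℝ)..1, g x * Real.log (g x) := by
  have hv := ent_J_val a b
  rw [← hJ] at hv
  have hch : (0 : ℝ) < ((a + b).choose a : ℝ) := by
    exact_mod_cast Nat.choose_pos (by omega)
  have hN : (0 : ℝ) < (a : ℝ) + b + 1 := by positivity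
  have hJpos : 0 < J := by
    by_contra h
    have : ((a : ℝ) + b + 1) * ((a + b).choose a : ℝ) * J ≤ 0 :=
      mul_nonpos_of_nonneg_of_nonpos (by positivity) (by linarith)
    linarith
  have hgc : Continuous g := by rw [hg]; fun_prop
  have hgl : Continuous fun x => g x * Real.log (g x) := Real.continuous_mul_log.comp hgc
  have hg0 : ∀ x ∈ Set.Icc (0 : ℝ) 1, 0 ≤ g x := by
    intro x hx
    have : 0 ≤ 1 - x := by linarith [hx.2]
    have := hx.1
    rw [hg]
    positivity
  have hgN : ∀ x ∈ Set.Icc (0 : ℝ) 1, g x ≤ (a : ℝ) + b + 1 := by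
    intro x hx
    have h := ent_binom a b x hx.1 hx.2
    simp only [hg]
    rw [div_le_iff₀ hJpos]
    have h2 : ((a + b).choose a : ℝ) * (x ^ a * (1 - x) ^ b) ≤
        ((a + b).choose a : ℝ) * (((a : ℝ) + b + 1) * J) := by linarith
    exact le_of_mul_le_mul_left h2 hch
  have hint : ∫ x in (0 : ℝ)..1, g x = 1 := by
    simp only [hg]
    rw [intervalIntegral.integral_div, ← hJ, div_self hJpos.ne']
  have hmean : ∫ x in (0 : ℝ)..1, x * g x = ((a : ℝ) + 1) / ((a : ℝ) + b + 2) := by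
    have h := ent_J_rec a b
    rw [← hJ] at h
    have e : ∀ x : ℝ, x * g x = x ^ (a + 1) * (1 - x) ^ b / J := by
      intro x
      simp only [hg]
      ring
    simp only [e]
    rw [intervalIntegral.integral_div, div_eq_div_iff hJpos.ne' (by positivity)]
    linarith
  constructor
  · calc (∫ x in (0 : ℝ)..1, g x * Real.log (g x))
        ≤ ∫ x in (0 : ℝ)..1, g x * Real.log ((a : ℝ) + b + 1) := by
          apply intervalIntegral.integral_mono_on (by norm_num)
            (hgl.intervalIntegrable _ _)
            (Continuous.intervalIntegrable (by fun_prop) _ _)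
          intro x hx
          rcases (hg0 x hx).eq_or_lt with h | h
          · simp [← h]
          · exact mul_le_mul_of_nonneg_left (Real.log_le_log h (hgN x hx)) h.le
      _ = Real.log ((a : ℝ) + b + 1) := by
          rw [intervalIntegral.integral_mul_const, hint, one_mul]
  · obtain ⟨l, hl⟩ : ∃ l : ℝ, l = ((a : ℝ) + b + 2) / ((a : ℝ) + 1) := ⟨_, rfl⟩
    have hlpos : 0 < l := by rw [hl]; positivity
    have hlog : Real.log l = Real.log ((a : ℝ) + b + 2) - Real.log ((a : ℝ) + 1) := by
      rw [hl, Real.log_div (by positivity) (by positivity)]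
    have hexp : ∫ x in (0 : ℝ)..1, l * Real.exp (-l * x) = 1 - Real.exp (-l) := by
      have : ∫ x in (0 : ℝ)..1, l * Real.exp (-l * x) =
          (-Real.exp (-l * 1)) - (-Real.exp (-l * 0)) := by
        apply intervalIntegral.integral_eq_sub_of_hasDerivAt
          (f := fun x : ℝ => -Real.exp (-l * x))
        · intro x _
          have h := (((hasDerivAt_id x).const_mul (-l)).exp).neg
          convert! h using 1
          simp
          ring
        · exact Continuous.intervalIntegrable (by fun_prop) _ _
      rw [this]
      simp
      ring
    have hlm : l * (((a : ℝ) + 1) / ((a : ℝ) + b + 2)) = 1 := by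
      rw [hl]
      have : (a : ℝ) + b + 2 ≠ 0 := by positivity
      have : (a : ℝ) + 1 ≠ 0 := by positivity
      field_simp
    have hle : (∫ x in (0 : ℝ)..1, (((Real.log l + 1) * g x - l * (x * g x))
          - l * Real.exp (-l * x))) ≤ ∫ x in (0 : ℝ)..1, g x * Real.log (g x) := by
      apply intervalIntegral.integral_mono_on (by norm_num)
        (Continuous.intervalIntegrable (by fun_prop) _ _)
        (hgl.intervalIntegrable _ _)
      intro x hx
      rcases (hg0 x hx).eq_or_lt with h | h
      · rw [← h]
        simp
        positivity
      · have h1 := Real.log_le_sub_one_of_pos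
          (show 0 < l * Real.exp (-l * x) / g x by positivity)
        rw [Real.log_div (by positivity) h.ne', Real.log_mul hlpos.ne' (Real.exp_pos _).ne',
          Real.log_exp] at h1
        have h2 := mul_le_mul_of_nonneg_left h1 h.le
        have h3 : g x * (l * Real.exp (-l * x) / g x - 1) = l * Real.exp (-l * x) - g x := by
          field_simp
        rw [h3] at h2
        linarith
    rw [intervalIntegral.integral_sub (Continuous.intervalIntegrable (by fun_prop) _ _)
      (Continuous.intervalIntegrable (by fun_prop) _ _),
      intervalIntegral.integral_sub (Continuous.intervalIntegrable (by fun_prop) _ _)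
      (Continuous.intervalIntegrable (by fun_prop) _ _),
      intervalIntegral.integral_const_mul (Real.log l + 1),
      intervalIntegral.integral_const_mul l (fun x => x * g x), hint, hmean, hexp, hlm, hlog] at hle
    have := Real.exp_pos (-l)
    linarith

theorem betaDifferentialEntropy_approx :
    ∃ C > (0 : ℝ), ∀ k n : ℕ, 2 ≤ k → k < n →
      |betaDifferentialEntropy (k : ℝ) ((n : ℝ) - (k : ℝ) + 1) + Real.log ((n : ℝ) + 1)| ≤
        C * Real.log k := by
  refine ⟨3, by norm_num, ?_⟩
  intro k n hk hkn
  obtain ⟨a, rfl⟩ : ∃ a, k = a + 1 := ⟨k - 1, by omega⟩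
  obtain ⟨b, rfl⟩ : ∃ b, n = a + 1 + b := ⟨n - (a + 1), by omega⟩
  have hl2 : Real.log 2 ≤ Real.log ((a + 1 : ℕ) : ℝ) :=
    Real.log_le_log (by norm_num) (by exact_mod_cast hk)
  have h2 := Real.log_two_gt_d9
  have e1 : ((a + 1 : ℕ) : ℝ) - 1 = (a : ℝ) := by push_cast; ring
  have e2 : ((a + 1 + b : ℕ) : ℝ) - ((a + 1 : ℕ) : ℝ) + 1 - 1 = (b : ℝ) := by push_cast; ring
  unfold betaDifferentialEntropy betaDensity
  simp only [e1, e2, Real.rpow_natCast]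
  obtain ⟨h3, h4⟩ := ent_main a b _ rfl _ rfl
  have e3 : ((a + 1 + b : ℕ) : ℝ) + 1 = (a : ℝ) + b + 2 := by push_cast; ring
  have h5 : Real.log ((a : ℝ) + b + 1) ≤ Real.log ((a : ℝ) + b + 2) :=
    Real.log_le_log (by positivity) (by linarith)
  rw [e3, abs_le]
  push_cast at hl2 ⊢
  constructor <;> linarith
end

section
/- Let U_1, ..., U_n be independent random variables uniformly distributed on [0, 1], with order statistics U_(1) ≤ U_(2) ≤ ... ≤ U_(n), and let c be a real number with 0 < c ≤ n. Then the probability that U_(1) ≥ 2c/n or that U_(i) − U_(i−1) ≥ 2c/n for some 2 ≤ i ≤ n is at most ⌈n/c⌉ · (1 − c/n)^n. -/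
open MeasureTheory ProbabilityTheory

/-- The `i`-th order statistic (1-indexed) of a finite family of reals: the `i`-th entry of the
list of values sorted in increasing order (with junk value `0` out of range). -/
noncomputable def orderStat {n : ℕ} (u : Fin n → ℝ) (i : ℕ) : ℝ :=
  ((List.ofFn u).mergeSort (fun a b => a ≤ b)).getD (i - 1) 0

theorem orderStat_gap_aux {n : ℕ} (hn : 0 < n) (u : Fin n → ℝ)
    (hu : ∀ i, u i ∈ Set.Icc (0 : ℝ) 1) (d : ℝ)
    (h : d ≤ orderStat u 1 ∨ ∃ i ∈ Finset.Icc 2 n, d ≤ orderStat u i - orderStat u (i - 1)) :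
    ∃ a b : ℝ, 0 ≤ a ∧ b ≤ 1 ∧ d ≤ b - a ∧ ∀ i, u i ≤ a ∨ b ≤ u i := by
  unfold orderStat at h
  set L := (List.ofFn u).mergeSort (fun a b => a ≤ b) with hL
  have hlen : L.length = n := by simp [hL]
  have hmem : ∀ x, x ∈ L ↔ ∃ i, u i = x := by
    intro x
    simp [hL, List.mem_mergeSort, List.mem_ofFn]
  have hs : L.Pairwise (· ≤ ·) := by
    have := List.pairwise_mergeSort (le := fun a b : ℝ => decide (a ≤ b))
      (by intro a b c; simpa using le_trans) (by intro a b; simpa using le_total a b) (List.ofFn u)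
    simpa [hL] using this
  have hmono : ∀ (i j : ℕ) (hi : i < L.length) (hj : j < L.length), i ≤ j → L[i] ≤ L[j] := by
    intro i j hi hj hij
    rcases hij.eq_or_lt with rfl | hlt
    · exact le_rfl
    · exact List.pairwise_iff_getElem.1 hs i j hi hj hlt
  have hbd : ∀ (i : ℕ) (hi : i < L.length), L[i] ∈ Set.Icc (0 : ℝ) 1 := by
    intro i hi
    obtain ⟨k, hk⟩ := (hmem _).1 (List.getElem_mem hi)
    rw [← hk]; exact hu k
  have hidx : ∀ k, ∃ (l : ℕ) (hl : l < L.length), L[l] = u k := fun k =>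
    List.mem_iff_getElem.1 ((hmem _).2 ⟨k, rfl⟩)
  rcases h with h | ⟨i, hi, h⟩
  · have h0 : 0 < L.length := by omega
    rw [List.getD_eq_getElem _ _ (by simpa using h0)] at h
    refine ⟨0, L[0], le_rfl, (hbd 0 h0).2, by simpa using h, fun k => Or.inr ?_⟩
    obtain ⟨l, hl, e⟩ := hidx k
    rw [← e]; exact hmono _ _ _ _ (Nat.zero_le _)
  · rw [Finset.mem_Icc] at hi
    have h1 : i - 1 < L.length := by omega
    have h2 : i - 1 - 1 < L.length := by omega
    rw [List.getD_eq_getElem _ _ h1, List.getD_eq_getElem _ _ h2] at h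
    refine ⟨L[i-1-1], L[i-1], (hbd _ h2).1, (hbd _ h1).2, h, fun k => ?_⟩
    obtain ⟨l, hl, e⟩ := hidx k
    rw [← e]
    rcases Nat.lt_or_ge l (i-1) with hlt | hge
    · left; exact hmono _ _ _ _ (by omega)
    · right; exact hmono _ _ _ _ hge

theorem gap_grid_aux {n : ℕ} (u : Fin n → ℝ) (d a b : ℝ) (hd : 0 < d) (ha : 0 ≤ a) (hb : b ≤ 1)
    (hab : 2 * d ≤ b - a) (h : ∀ i, u i ≤ a ∨ b ≤ u i) :
    ∃ k : ℕ, k < ⌈1 / d⌉₊ ∧ ((k : ℝ) + 1) * d ≤ 1 ∧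
      ∀ i, u i ∈ (Set.Ioo (k * d) ((k + 1) * d))ᶜ := by
  have h1 : (⌈a / d⌉₊ : ℝ) < a / d + 1 := Nat.ceil_lt_add_one (by positivity)
  have h2 : a / d ≤ ⌈a / d⌉₊ := Nat.le_ceil _
  generalize ⌈a / d⌉₊ = k at h1 h2
  have e : a / d * d = a := div_mul_cancel₀ _ hd.ne'
  have h3 : (k : ℝ) * d < a + d := by nlinarith
  have h4 : a ≤ k * d := by nlinarith
  refine ⟨k, ?_, by nlinarith, ?_⟩
  · rw [Nat.lt_ceil, lt_div_iff₀ hd]; nlinarith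
  · rintro i ⟨h5, h6⟩
    rcases h i with h | h <;> nlinarith

theorem prob_avoid_aux {Ω : Type*} [MeasurableSpace Ω] (μ : Measure Ω)
    [IsProbabilityMeasure μ] (n : ℕ) (U : Fin n → Ω → ℝ)
    (hmeas : ∀ i, Measurable (U i))
    (hindep : iIndepFun U μ)
    (hunif : ∀ i, μ.map (U i) = volume.restrict (Set.Icc (0 : ℝ) 1))
    (x y : ℝ) (hx : 0 ≤ x) (hy : y ≤ 1) (hxy : x ≤ y) :
    μ.real {ω | ∀ i, U i ω ∈ (Set.Ioo x y)ᶜ} = (1 - (y - x)) ^ n := by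
  have hset : {ω | ∀ i, U i ω ∈ (Set.Ioo x y)ᶜ}
      = ⋂ i ∈ (Finset.univ : Finset (Fin n)), U i ⁻¹' (Set.Ioo x y)ᶜ := by
    ext ω; simp
  have hsub : Set.Ioo x y ⊆ Set.Icc 0 1 := fun z hz =>
    ⟨hx.trans hz.1.le, hz.2.le.trans hy⟩
  have hone : ∀ i, μ.real (U i ⁻¹' (Set.Ioo x y)ᶜ) = 1 - (y - x) := by
    intro i
    rw [Set.preimage_compl, probReal_compl_eq_one_sub (hmeas i measurableSet_Ioo),
      ← map_measureReal_apply (hmeas i) measurableSet_Ioo, hunif i,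
      measureReal_restrict_apply measurableSet_Ioo,
      Set.inter_eq_left.2 hsub,
      Real.volume_real_Ioo_of_le hxy]
  rw [hset, measureReal_def, hindep.measure_inter_preimage_eq_mul Finset.univ
    (fun i _ => measurableSet_Ioo.compl), ENNReal.toReal_prod]
  simp only [← measureReal_def, hone]
  simp

/-- For `n` i.i.d. uniform random variables on `[0, 1]` with order statistics
`U_(1) ≤ ... ≤ U_(n)`, and `0 < c ≤ n`, the probability that `U_(1) ≥ 2c/n` or that some
successive gap `U_(i) - U_(i-1)` is at least `2c/n` is at most `⌈n/c⌉ * (1 - c/n)^n`. -/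
theorem prob_large_gap_le {Ω : Type*} [MeasurableSpace Ω] (μ : Measure Ω)
    [IsProbabilityMeasure μ] (n : ℕ) (U : Fin n → Ω → ℝ)
    (hmeas : ∀ i, Measurable (U i))
    (hindep : iIndepFun U μ)
    (hunif : ∀ i, μ.map (U i) = volume.restrict (Set.Icc (0 : ℝ) 1))
    (c : ℝ) (hc : 0 < c) (hcn : c ≤ n) :
    (μ {ω | 2 * c / n ≤ orderStat (fun i => U i ω) 1 ∨
        ∃ i ∈ Finset.Icc 2 n,
          2 * c / n ≤ orderStat (fun i => U i ω) i - orderStat (fun i => U i ω) (i - 1)}).toReal ≤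
      (⌈(n : ℝ) / c⌉₊ : ℝ) * (1 - c / n) ^ n := by
  have hn0 : (0 : ℝ) < n := hc.trans_le hcn
  have hn : 0 < n := by exact_mod_cast hn0
  set d : ℝ := c / n with hd
  have hdpos : 0 < d := div_pos hc hn0
  have hd1 : d ≤ 1 := (div_le_one hn0).2 hcn
  have hinv : (n : ℝ) / c = 1 / d := by rw [hd, one_div_div]
  have h2d : 2 * c / n = 2 * d := by rw [hd]; ring
  rw [hinv, h2d]
  have hae : ∀ᵐ ω ∂μ, ∀ i, U i ω ∈ Set.Icc (0 : ℝ) 1 := by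
    rw [ae_all_iff]
    intro i
    have : ∀ᵐ x ∂(μ.map (U i)), x ∈ Set.Icc (0 : ℝ) 1 := by
      rw [hunif i]; exact ae_restrict_mem measurableSet_Icc
    exact ae_of_ae_map (hmeas i).aemeasurable this
  set F := (Finset.range ⌈1 / d⌉₊).filter (fun k : ℕ => ((k : ℝ) + 1) * d ≤ 1) with hF
  let E : ℕ → Set Ω := fun k => {ω | ∀ i, U i ω ∈ (Set.Ioo (k * d) ((k + 1) * d))ᶜ}
  have hE : ∀ k ∈ F, μ.real (E k) = (1 - d) ^ n := by
    intro k hk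
    have hk' := (Finset.mem_filter.1 hk).2
    have := prob_avoid_aux μ n U hmeas hindep hunif (k * d) ((k + 1) * d) (by positivity) hk'
      (by nlinarith)
    rw [this]; ring
  calc _ ≤ μ.real (⋃ k ∈ F, E k) := by
        rw [measureReal_def]
        refine ENNReal.toReal_mono (measure_ne_top _ _) (measure_mono_ae ?_)
        filter_upwards [hae] with ω hω h
        obtain ⟨a, b, ha, hb, hab, hi⟩ := orderStat_gap_aux hn (fun i => U i ω) hω (2 * d) h
        obtain ⟨k, hk, hk1, hk2⟩ := gap_grid_aux _ d a b hdpos ha hb hab hi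
        exact Set.mem_biUnion (x := k) (Finset.mem_filter.2 ⟨Finset.mem_range.2 hk, hk1⟩) hk2
    _ ≤ ∑ k ∈ F, μ.real (E k) := measureReal_biUnion_finset_le _ _
    _ = F.card * (1 - d) ^ n := by rw [Finset.sum_congr rfl hE]; simp
    _ ≤ _ := by
        have : F.card ≤ ⌈1 / d⌉₊ := (Finset.card_filter_le _ _).trans (by simp)
        have h0 : 0 ≤ 1 - d := by linarith
        gcongr
end

section
/- Let n ≥ 3 be an integer and let U_1, ..., U_n be independent random variables uniformly distributed on [0, 1], with order statistics U_(1) ≤ ... ≤ U_(n). Then the probability that U_(1) ≥ 4(ln n)/n or that U_(i) − U_(i−1) ≥ 4(ln n)/n for some 2 ≤ i ≤ n is at most ⌈n/(2 ln n)⌉ / n². -/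
open MeasureTheory ProbabilityTheory

lemma os_aux {n : ℕ} (u : Fin n → ℝ) :
    (∀ i, 1 ≤ i → i ≤ n → ∃ j, orderStat u i = u j) ∧
    (∀ j, ∃ m, 1 ≤ m ∧ m ≤ n ∧ u j = orderStat u m) ∧
    (∀ i m, 1 ≤ i → i ≤ m → m ≤ n → orderStat u i ≤ orderStat u m) := by
  unfold orderStat
  set l := (List.ofFn u).mergeSort (fun a b => a ≤ b) with hl
  have hlen : l.length = n := by simp [hl]
  have hs : l.Pairwise (fun a b => a ≤ b) := by
    have := List.pairwise_mergeSort (le := fun a b : ℝ => decide (a ≤ b))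
      (by intro a b c; simpa using le_trans) (by intro a b; simpa using le_total a b) (List.ofFn u)
    simpa [hl] using this
  have hmem : ∀ x, x ∈ l ↔ ∃ j, u j = x := by
    intro x
    simp [hl, List.mem_mergeSort, List.mem_ofFn]
  refine ⟨?_, ?_, ?_⟩
  · intro i h1 h2
    have hi : i - 1 < l.length := by omega
    rw [List.getD_eq_getElem _ _ hi]
    obtain ⟨j, hj⟩ := (hmem _).1 (List.getElem_mem hi)
    exact ⟨j, hj.symm⟩
  · intro j
    obtain ⟨m, hm, h⟩ := List.getElem_of_mem ((hmem (u j)).2 ⟨j, rfl⟩)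
    refine ⟨m + 1, by omega, by omega, ?_⟩
    rw [List.getD_eq_getElem _ _ (by simpa using hm)]
    simpa using h.symm
  · intro i m h1 h2 h3
    have hi : i - 1 < l.length := by omega
    have hm : m - 1 < l.length := by omega
    rw [List.getD_eq_getElem _ _ hi, List.getD_eq_getElem _ _ hm]
    rcases eq_or_lt_of_le h2 with rfl | h
    · exact le_rfl
    · exact List.pairwise_iff_getElem.1 hs _ _ hi hm (by omega)

lemma gap_cell {n : ℕ} (hn : 3 ≤ n) (u : Fin n → ℝ) (hu : ∀ j, u j ∈ Set.Icc (0 : ℝ) 1)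
    (L : ℝ) (hL : 0 < L)
    (h : 2 * L ≤ orderStat u 1 ∨
        ∃ i ∈ Finset.Icc 2 n, 2 * L ≤ orderStat u i - orderStat u (i - 1)) :
    ∃ k ∈ Finset.range ⌊1 / L⌋₊, ∀ j, u j ∉ Set.Ico ((k : ℝ) * L) ((k + 1) * L) := by
  obtain ⟨h1, h2, h3⟩ := os_aux u
  have key : ∀ k : ℕ, ((k : ℝ) + 1) * L ≤ 1 → k ∈ Finset.range ⌊1 / L⌋₊ := by
    intro k hk
    rw [Finset.mem_range, ← Nat.succ_le_iff]
    apply Nat.le_floor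
    rw [le_div_iff₀ hL]
    push_cast
    exact hk
  rcases h with h | ⟨i, hi, h⟩
  · obtain ⟨j, hj⟩ := h1 1 le_rfl (by omega)
    refine ⟨0, key 0 ?_, ?_⟩
    · have := (hu j).2
      push_cast; linarith
    · intro j hj
      obtain ⟨m, hm1, hm2, hm⟩ := h2 j
      have := h3 1 m le_rfl hm1 hm2
      have := hj.2
      push_cast at this; linarith
  · rw [Finset.mem_Icc] at hi
    obtain ⟨ja, hja⟩ := h1 (i-1) (by omega) (by omega)
    obtain ⟨jb, hjb⟩ := h1 i (by omega) (by omega)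
    set a := orderStat u (i-1)
    set b := orderStat u i
    have ha : 0 ≤ a := hja ▸ (hu ja).1
    have hb : b ≤ 1 := hjb ▸ (hu jb).2
    have f1 : (⌊a / L⌋₊ : ℝ) * L ≤ a := by
      rw [← le_div_iff₀ hL]; exact Nat.floor_le (by positivity)
    have f2 : a < ((⌊a / L⌋₊ : ℝ) + 1) * L := by
      rw [← div_lt_iff₀ hL]; exact Nat.lt_floor_add_one _
    refine ⟨⌊a / L⌋₊ + 1, key _ ?_, ?_⟩
    · push_cast; linarith
    · rintro j ⟨hj1, hj2⟩
      push_cast at hj1 hj2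
      obtain ⟨m, hm1, hm2, hm⟩ := h2 j
      rcases le_or_gt i m with him | him
      · have : b ≤ _ := h3 i m (by omega) him hm2
        linarith
      · have : _ ≤ a := h3 m (i-1) hm1 (by omega) (by omega)
        linarith

lemma cell_prob {Ω : Type*} [MeasurableSpace Ω] (μ : Measure Ω)
    [IsProbabilityMeasure μ] (n : ℕ) (U : Fin n → Ω → ℝ)
    (hmeas : ∀ i, Measurable (U i))
    (hindep : iIndepFun U μ)
    (hunif : ∀ i, μ.map (U i) = volume.restrict (Set.Icc (0 : ℝ) 1))
    (c d : ℝ) (hc : 0 ≤ c) (hcd : c ≤ d) (hd : d ≤ 1) :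
    μ.real {ω | ∀ j, U j ω ∉ Set.Ico c d} ≤ Real.exp (-(n * (d - c))) := by
  have hset : {ω | ∀ j, U j ω ∉ Set.Ico c d} =
      ⋂ j ∈ (Finset.univ : Finset (Fin n)), U j ⁻¹' (Set.Ico c d)ᶜ := by
    ext ω; simp
  have hp : ∀ j, μ.real (U j ⁻¹' (Set.Ico c d)ᶜ) = 1 - (d - c) := by
    intro j
    rw [Set.preimage_compl, probReal_compl_eq_one_sub ((hmeas j) measurableSet_Ico)]
    rw [← map_measureReal_apply (hmeas j) measurableSet_Ico, hunif j,
      measureReal_restrict_apply measurableSet_Ico, Set.inter_eq_left.2]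
    · simp [hcd]
    · intro x hx; exact ⟨hc.trans hx.1, hx.2.le.trans hd⟩
  have := hindep.measure_inter_preimage_eq_mul (S := Finset.univ)
    (sets := fun _ => (Set.Ico c d)ᶜ) (fun _ _ => measurableSet_Ico.compl)
  rw [hset, Measure.real, this, ENNReal.toReal_prod]
  have h2 : ∀ j, (μ (U j ⁻¹' (Set.Ico c d)ᶜ)).toReal = 1 - (d - c) := hp
  simp only [h2, Finset.prod_const, Finset.card_univ, Fintype.card_fin]
  have h3 : 1 - (d - c) ≤ Real.exp (-(d - c)) := Real.one_sub_le_exp_neg _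
  calc (1 - (d - c)) ^ n ≤ (Real.exp (-(d - c))) ^ n := pow_le_pow_left₀ (by linarith) h3 n
    _ = _ := by rw [← Real.exp_nat_mul]; ring_nf

/-- For `n ≥ 3` i.i.d. uniform random variables on `[0, 1]` with order statistics
`U_(1) ≤ ... ≤ U_(n)`, the probability that `U_(1) ≥ 4(ln n)/n` or that some successive gap
`U_(i) - U_(i-1)` is at least `4(ln n)/n` is at most `⌈n/(2 ln n)⌉ / n²`. -/
theorem prob_large_gap_le_log {Ω : Type*} [MeasurableSpace Ω] (μ : Measure Ω)
    [IsProbabilityMeasure μ] (n : ℕ) (hn : 3 ≤ n) (U : Fin n → Ω → ℝ)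
    (hmeas : ∀ i, Measurable (U i))
    (hindep : iIndepFun U μ)
    (hunif : ∀ i, μ.map (U i) = volume.restrict (Set.Icc (0 : ℝ) 1)) :
    (μ {ω | 4 * Real.log n / n ≤ orderStat (fun i => U i ω) 1 ∨
        ∃ i ∈ Finset.Icc 2 n,
          4 * Real.log n / n ≤
            orderStat (fun i => U i ω) i - orderStat (fun i => U i ω) (i - 1)}).toReal ≤
      (⌈(n : ℝ) / (2 * Real.log n)⌉₊ : ℝ) / (n : ℝ) ^ 2 := by
  have hn0 : (0 : ℝ) < n := by positivity
  have hlog : 0 < Real.log n := Real.log_pos (by exact_mod_cast (by omega : 1 < n))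
  set L : ℝ := 2 * Real.log n / n with hLdef
  have hL : 0 < L := by positivity
  have h4 : 4 * Real.log n / n = 2 * L := by rw [hLdef]; ring
  have hinv : (n : ℝ) / (2 * Real.log n) = 1 / L := by rw [hLdef]; field_simp
  rw [h4, hinv]
  have hae : ∀ᵐ ω ∂μ, ∀ j, U j ω ∈ Set.Icc (0 : ℝ) 1 := by
    rw [ae_all_iff]
    intro j
    refine ae_of_ae_map (p := fun x => x ∈ Set.Icc (0 : ℝ) 1) (hmeas j).aemeasurable ?_
    rw [hunif j]
    exact ae_restrict_mem measurableSet_Icc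
  have hle : μ {ω | 2 * L ≤ orderStat (fun i => U i ω) 1 ∨
        ∃ i ∈ Finset.Icc 2 n,
          2 * L ≤ orderStat (fun i => U i ω) i - orderStat (fun i => U i ω) (i - 1)} ≤
      μ (⋃ k ∈ Finset.range ⌊1 / L⌋₊,
        {ω | ∀ j, U j ω ∉ Set.Ico ((k : ℝ) * L) ((k + 1) * L)}) := by
    apply measure_mono_ae
    filter_upwards [hae] with ω hω h
    obtain ⟨k, hk, hh⟩ := gap_cell hn (fun i => U i ω) hω L hL h
    exact Set.mem_biUnion hk hh
  have hcell : ∀ k ∈ Finset.range ⌊1 / L⌋₊,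
      μ.real {ω | ∀ j, U j ω ∉ Set.Ico ((k : ℝ) * L) ((k + 1) * L)} ≤ 1 / (n : ℝ) ^ 2 := by
    intro k hk
    have hk1 : ((k : ℝ) + 1) * L ≤ 1 := by
      rw [← le_div_iff₀ hL]
      have h1 : ((k + 1 : ℕ) : ℝ) ≤ ⌊1 / L⌋₊ := by
        exact_mod_cast Finset.mem_range.1 hk
      have h2 := Nat.floor_le (show 0 ≤ 1 / L by positivity)
      push_cast at h1
      linarith
    refine (cell_prob μ n U hmeas hindep hunif _ _ (by positivity) (by nlinarith) hk1).trans ?_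
    have : (n : ℝ) * (((k : ℝ) + 1) * L - k * L) = 2 * Real.log n := by
      rw [hLdef]; field_simp; ring
    rw [this, Real.exp_neg, one_div, two_mul, Real.exp_add, Real.exp_log hn0, sq]
  calc _ ≤ μ.real (⋃ k ∈ Finset.range ⌊1 / L⌋₊,
        {ω | ∀ j, U j ω ∉ Set.Ico ((k : ℝ) * L) ((k + 1) * L)}) :=
        ENNReal.toReal_mono (measure_ne_top _ _) hle
    _ ≤ ∑ k ∈ Finset.range ⌊1 / L⌋₊, _ := measureReal_biUnion_finset_le _ _
    _ ≤ ∑ k ∈ Finset.range ⌊1 / L⌋₊, 1 / (n : ℝ) ^ 2 := Finset.sum_le_sum hcell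
    _ = (⌊1 / L⌋₊ : ℝ) / (n : ℝ) ^ 2 := by
        rw [Finset.sum_const, Finset.card_range, nsmul_eq_mul]; ring
    _ ≤ _ := by
        gcongr
        exact Nat.floor_le_ceil _
end
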